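/- arXiv:1807.05869 — 2 statements merged into one kernel-verified Lean document; each statement's English description precedes it below -/
import Mathlib

section
/- Let A be a graded Artinian algebra over a field k and let ℓ ∈ m_A be any (possibly non-homogeneous) element. Then P_ℓ ≤ H(Gr_{m_A}(A))^∨ in the dominance order, where Gr_{m_A}(A) is the associated graded algebra of A with respect to its maximal graded ideal. -/
/-!
The conjugate partition satisfies `∑_{r ≤ i} (H^∨)_r = ∑_d min (H d) i`, so dominance amounts to
bounding the sum of any `i` parts of `P` by this quantity.

The powers `F d = m ^ d` form a finite filtration which `f = (ℓ * ·)` shifts by one step, and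
`H d = dim F d / F (d + 1)`.  For a set `S` of at most `j` degrees this forces
`rank (f ^ j) ≤ ∑_{d ∉ S} H d` (`finrank_map_pow_le`): going up through the filtration, the step at
a degree of `S` is paid for by one application of `f`, the step at any other degree costs `H d`.
Taking `S = {d | i < H d}` and `j = #S`, the sum of `i` parts of `P` is at most
`i * j + ∑_p (p - j) = i * j + rank (f ^ j) ≤ ∑_d min (H d) i`.

The filtration is finite because homogeneous elements of positive degree are nilpotent in a
finite-dimensional graded algebra, hence `m` is contained in the nilradical, which is nilpotent.
-/

/-- `P` is the Jordan type (multiset of Jordan block sizes) of the `k`-linear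
endomorphism `f`, characterized by the ranks of the powers of `f`. -/
def IsJordanTypeOf {k A : Type*} [Field k] [AddCommGroup A] [Module k A]
    (f : A →ₗ[k] A) (P : Multiset ℕ) : Prop :=
  (∀ p ∈ P, 0 < p) ∧
  ∀ j : ℕ, Module.finrank k (LinearMap.range (f ^ j)) = (P.map (fun p => p - j)).sum

/-- Dominance order on partitions (as multisets of parts): `DomLE P Q` means
`P ≤ Q` in the dominance order. -/
def DomLE (P Q : Multiset ℕ) : Prop :=
  P.sum = Q.sum ∧
  ∀ i : ℕ, ((P.sort (· ≥ ·)).take i).sum ≤ ((Q.sort (· ≥ ·)).take i).sum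

/-- The conjugate partition of a Hilbert function `H` (whose values are bounded
by `n`): its `i`-th part (for `1 ≤ i ≤ n`) is `#{d | H d ≥ i}`; zero parts are
discarded. -/
noncomputable def conjHilb (H : ℕ → ℕ) (n : ℕ) : Multiset ℕ :=
  ((Multiset.range n).map (fun i => Set.ncard {d : ℕ | i + 1 ≤ H d})).filter (fun c => 0 < c)

/-- The maximal graded ideal of a graded algebra, generated by the homogeneous
elements of positive degree. -/
def gradedMaxIdeal {k A : Type*} [Field k] [CommRing A] [Algebra k A]
    (𝒜 : ℕ → Submodule k A) : Ideal A :=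
  Ideal.span {x : A | ∃ i : ℕ, x ∈ 𝒜 (i + 1)}

/-- The Hilbert function of the associated graded algebra `Gr_m(A) = ⊕ mⁱ/mⁱ⁺¹`
of an Artinian local (or graded) algebra with respect to the ideal `m`:
`H i = dim_k mⁱ/mⁱ⁺¹ = dim_k mⁱ − dim_k mⁱ⁺¹`. -/
noncomputable def grHilb (k : Type*) {A : Type*} [Field k] [CommRing A] [Algebra k A]
    (m : Ideal A) : ℕ → ℕ :=
  fun i => Module.finrank k ((m ^ i).restrictScalars k)
    - Module.finrank k ((m ^ (i + 1)).restrictScalars k)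

/-! ### Ranks of powers of a map shifting a filtration -/

theorem finrank_map_le_add {k V : Type*} [Field k] [AddCommGroup V] [Module k V]
    [FiniteDimensional k V] (g : V →ₗ[k] V) (U W : Submodule k V) (h : U ≤ W) :
    Module.finrank k (W.map g) ≤
      Module.finrank k (U.map g) + (Module.finrank k W - Module.finrank k U) := by
  obtain ⟨C, hC⟩ := Submodule.exists_isCompl U
  have hsup : U ⊔ (C ⊓ W) = W := by
    rw [← sup_inf_assoc_of_le C h, hC.sup_eq_top, top_inf_eq]
  have hinf : U ⊓ (C ⊓ W) = ⊥ := by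
    rw [← inf_assoc, hC.inf_eq_bot, bot_inf_eq]
  have h1 := Submodule.finrank_sup_add_finrank_inf_eq U (C ⊓ W)
  rw [hsup, hinf, finrank_bot] at h1
  have h2 : Module.finrank k (W.map g) ≤
      Module.finrank k (U.map g) + Module.finrank k ((C ⊓ W).map g) := by
    conv_lhs => rw [← hsup, Submodule.map_sup]
    exact Submodule.finrank_add_le_finrank_add_finrank _ _
  have h3 := Submodule.finrank_map_le g (C ⊓ W)
  omega

/-- If `f` maps each step of a decreasing filtration into the next one and `S` contains at most `j`
degrees `≥ i`, then the rank of `f ^ j` on `F i` is bounded by the dimensions of the graded pieces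
in degrees outside `S`. -/
theorem finrank_map_pow_le {k V : Type*} [Field k] [AddCommGroup V] [Module k V]
    [FiniteDimensional k V] (f : V →ₗ[k] V) (F : ℕ → Submodule k V) (hF : Antitone F)
    (hf : ∀ i, (F i).map f ≤ F (i + 1)) (N : ℕ) (hN : F N = ⊥) (S : Finset ℕ) :
    ∀ t i j : ℕ, i + t = N → (S.filter (i ≤ ·)).card ≤ j →
      Module.finrank k ((F i).map (f ^ j)) ≤
        ∑ d ∈ (Finset.Ico i N).filter (· ∉ S),
          (Module.finrank k (F d) - Module.finrank k (F (d + 1))) := by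
  intro t
  induction t with
  | zero =>
    intro i j hi _
    obtain rfl : i = N := by omega
    simp [hN]
  | succ t ih =>
    intro i j hi hj
    have hIco : Finset.Ico i N = insert i (Finset.Ico (i + 1) N) := by
      ext x; simp; omega
    by_cases hiS : i ∈ S
    · have hS : S.filter (i ≤ ·) = insert i (S.filter (i + 1 ≤ ·)) := by
        ext x
        simp only [Finset.mem_filter, Finset.mem_insert]
        constructor
        · rintro ⟨h1, h2⟩
          by_cases hx : x = i
          · exact Or.inl hx
          · exact Or.inr ⟨h1, by omega⟩
        · rintro (rfl | ⟨h1, h2⟩)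
          · exact ⟨hiS, le_rfl⟩
          · exact ⟨h1, by omega⟩
      rw [hS, Finset.card_insert_of_notMem (by simp)] at hj
      obtain ⟨j, rfl⟩ : ∃ j', j = j' + 1 := ⟨j - 1, by omega⟩
      rw [hIco, Finset.filter_insert, if_neg (by simpa using hiS), pow_succ, Module.End.mul_eq_comp,
        Submodule.map_comp]
      exact (Submodule.finrank_mono (Submodule.map_mono (hf i))).trans
        (ih (i + 1) j (by omega) (by omega))
    · have hj' : (S.filter (i + 1 ≤ ·)).card ≤ j := by
        refine le_trans (Finset.card_le_card ?_) hj
        intro x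
        simp only [Finset.mem_filter]
        rintro ⟨h1, h2⟩
        exact ⟨h1, by omega⟩
      rw [hIco, Finset.filter_insert, if_pos hiS, Finset.sum_insert (by simp)]
      have h1 := ih (i + 1) j (by omega) hj'
      have h2 := finrank_map_le_add (f ^ j) _ _ (hF (Nat.le_succ i))
      simp only [Nat.succ_eq_add_one] at h2
      omega

/-! ### Partial sums of partitions -/

theorem sum_take_filter_pos (L : List ℕ) (hL : L.Pairwise (· ≥ ·)) (i : ℕ) :
    ((L.filter (fun c => 0 < c)).take i).sum = (L.take i).sum := by
  induction L generalizing i with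
  | nil => simp
  | cons a t ih =>
    rw [List.pairwise_cons] at hL
    rcases Nat.eq_zero_or_pos a with rfl | ha
    · have hz : ∀ x ∈ (0 :: t), x = 0 := by
        intro x hx
        rcases List.mem_cons.1 hx with h | h
        · exact h
        · exact Nat.le_zero.1 (hL.1 x h)
      rw [List.sum_eq_zero (fun x hx => hz x (List.mem_of_mem_take hx)),
        List.sum_eq_zero
          (fun x hx => hz x (List.mem_of_mem_filter (List.mem_of_mem_take hx)))]
    · rw [List.filter_cons_of_pos (by simpa using ha)]
      cases i with
      | zero => simp
      | succ i => simp [ih hL.2 i]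

theorem sum_take_le (L : List ℕ) (i j : ℕ) :
    (L.take i).sum ≤ i * j + (L.map (fun p => p - j)).sum := by
  induction L generalizing i with
  | nil => simp
  | cons a t ih =>
    cases i with
    | zero => simp
    | succ i =>
      have := ih i
      simp only [List.take_succ_cons, List.sum_cons, List.map_cons]
      have : (i + 1) * j = i * j + j := by ring
      omega

/-- Counting the cells of the Young diagram of `H` below height `r` by rows and by columns. -/
theorem sum_range_ncard (H : ℕ → ℕ) (N r : ℕ) (hH : ∀ d, N ≤ d → H d = 0) :
    ∑ x ∈ Finset.range r, Set.ncard {d : ℕ | x + 1 ≤ H d} =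
      ∑ d ∈ Finset.range N, min (H d) r := by
  have h1 : ∀ x, Set.ncard {d : ℕ | x + 1 ≤ H d} =
      ∑ d ∈ Finset.range N, if x < H d then 1 else 0 := by
    intro x
    rw [← Finset.card_filter, ← Set.ncard_coe_finset]
    congr 1
    ext d
    simp only [Set.mem_ofPred_eq, Finset.coe_filter, Finset.mem_range]
    constructor
    · intro h
      refine ⟨?_, h⟩
      by_contra hd
      have := hH d (by omega)
      omega
    · exact fun h => h.2
  simp_rw [h1]
  rw [Finset.sum_comm]
  refine Finset.sum_congr rfl fun d _ => ?_
  rw [← Finset.card_filter]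
  have : (Finset.range r).filter (fun x => x < H d) = Finset.range (min (H d) r) := by
    ext x; simp; omega
  rw [this, Finset.card_range]

theorem ncard_antitone (H : ℕ → ℕ) (N : ℕ) (hH : ∀ d, N ≤ d → H d = 0) :
    Antitone fun x => Set.ncard {d : ℕ | x + 1 ≤ H d} := by
  intro x y hxy
  refine Set.ncard_le_ncard (fun d hd => ?_) ((Set.finite_lt_nat N).subset fun d hd => ?_)
  · simp only [Set.mem_ofPred_eq] at hd ⊢
    omega
  · simp only [Set.mem_ofPred_eq] at hd ⊢
    by_contra h
    have := hH d (by omega)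
    omega

theorem conjHilb_sort_take_sum (H : ℕ → ℕ) (n N : ℕ) (hH : ∀ d, N ≤ d → H d = 0)
    (hn : ∀ d, H d ≤ n) (i : ℕ) :
    (((conjHilb H n).sort (· ≥ ·)).take i).sum = ∑ d ∈ Finset.range N, min (H d) i := by
  set c : ℕ → ℕ := fun x => Set.ncard {d : ℕ | x + 1 ≤ H d} with hc
  have hanti : Antitone c := ncard_antitone H N hH
  have hsorted : ((List.range n).map c).Pairwise (· ≥ ·) := by
    rw [List.pairwise_map]
    exact List.pairwise_lt_range.imp fun h => hanti h.le
  have hQ : conjHilb H n = (((List.range n).map c).filter (fun x => 0 < x) : List ℕ) := by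
    rw [conjHilb, Multiset.range, Multiset.map_coe, Multiset.filter_coe]
  have hsort : (conjHilb H n).sort (· ≥ ·) = ((List.range n).map c).filter (fun x => 0 < x) := by
    rw [hQ]
    refine List.Perm.eq_of_pairwise' (Multiset.pairwise_sort _ _) (hsorted.filter _) ?_
    rw [← Multiset.coe_eq_coe, Multiset.sort_eq]
  rw [hsort, sum_take_filter_pos _ hsorted, ← List.map_take, List.take_range]
  have h := sum_range_ncard H N (min i n) hH
  have hlist : ((List.range (min i n)).map c).sum = ∑ x ∈ Finset.range (min i n), c x := rfl
  rw [hlist, h]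
  refine Finset.sum_congr rfl fun d _ => ?_
  have := hn d
  omega

/-! ### The maximal graded ideal is nilpotent -/

theorem gradedMaxIdeal_isNilpotent {k A : Type*} [Field k] [CommRing A] [Algebra k A]
    (𝒜 : ℕ → Submodule k A) [GradedAlgebra 𝒜] [FiniteDimensional k A] :
    IsNilpotent (gradedMaxIdeal 𝒜) := by
  have : IsNoetherianRing A := isNoetherian_of_tower k inferInstance
  obtain ⟨n, hn⟩ := IsNoetherianRing.isNilpotent_nilradical A
  have hle : gradedMaxIdeal 𝒜 ≤ nilradical A := by
    rw [gradedMaxIdeal, Ideal.span_le]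
    rintro x ⟨i, hx⟩
    have hfin : {j | 𝒜 j ≠ ⊥}.Finite :=
      WellFoundedGT.finite_ne_bot_of_iSupIndep
        (DirectSum.Decomposition.isInternal 𝒜).submodule_iSupIndep
    obtain ⟨M, hM⟩ := hfin.bddAbove
    have hbot : 𝒜 ((M + 1) * (i + 1)) = ⊥ := by
      by_contra h
      have := hM h
      nlinarith
    refine ⟨M + 1, ?_⟩
    have := SetLike.pow_mem_graded (M + 1) hx
    rw [smul_eq_mul, hbot] at this
    simpa using this
  exact ⟨n, le_bot_iff.1 ((Ideal.pow_right_mono hle n).trans hn.le)⟩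

/-- Let `A` be a graded Artinian algebra over a field `k` and let `ℓ ∈ m_A` be
any (possibly non-homogeneous) element.  Then `P_ℓ ≤ H(Gr_{m_A}(A))^∨` in the
dominance order, where `Gr_{m_A}(A)` is the associated graded algebra of `A`
with respect to its maximal graded ideal. -/
theorem jordan_type_le_conj_hilbert_of_assoc_graded
    {k A : Type*} [Field k] [CommRing A] [Algebra k A]
    (𝒜 : ℕ → Submodule k A) [GradedAlgebra 𝒜] [FiniteDimensional k A]
    (hconn : 𝒜 0 = Submodule.span k {(1 : A)})
    (ℓ : A) (hℓ : ℓ ∈ gradedMaxIdeal 𝒜)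
    (P : Multiset ℕ) (hP : IsJordanTypeOf (LinearMap.mulLeft k ℓ) P) :
    DomLE P (conjHilb (grHilb k (gradedMaxIdeal 𝒜)) (Module.finrank k A)) := by
  obtain ⟨N, hN⟩ := gradedMaxIdeal_isNilpotent 𝒜
  set m := gradedMaxIdeal 𝒜 with hm
  set F : ℕ → Submodule k A := fun i => (m ^ i).restrictScalars k with hFdef
  have hF : Antitone F := fun i j hij x hx => Ideal.pow_le_pow_right hij hx
  have hFN : F N = ⊥ := by
    simp only [hFdef, hN]
    rfl
  have hF0 : F 0 = ⊤ := by
    simp only [hFdef, pow_zero, Ideal.one_eq_top]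
    rfl
  have hshift : ∀ i, (F i).map (LinearMap.mulLeft k ℓ) ≤ F (i + 1) := by
    rintro i _ ⟨x, hx, rfl⟩
    change ℓ * x ∈ m ^ (i + 1)
    rw [pow_succ']
    exact Ideal.mul_mem_mul hℓ hx
  set H := grHilb k m with hHdef
  have hH : ∀ d, H d = Module.finrank k (F d) - Module.finrank k (F (d + 1)) := fun d => rfl
  have hH0 : ∀ d, N ≤ d → H d = 0 := by
    intro d hd
    have : F d = ⊥ := le_bot_iff.1 (hFN ▸ hF hd)
    rw [hH, this, finrank_bot, Nat.zero_sub]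
  have hHn : ∀ d, H d ≤ Module.finrank k A := fun d =>
    (Nat.sub_le _ _).trans (Submodule.finrank_le _)
  have hHsum : ∑ d ∈ Finset.range N, H d = Module.finrank k A := by
    have htel : ∀ r, ∑ d ∈ Finset.range r, H d + Module.finrank k (F r) = Module.finrank k A := by
      intro r
      induction r with
      | zero => rw [hF0, finrank_top, Finset.sum_range_zero, zero_add]
      | succ r ih =>
        have := Submodule.finrank_mono (hF (Nat.le_succ r))
        rw [Finset.sum_range_succ, hH]
        simp only [Nat.succ_eq_add_one] at this
        omega
    have := htel N
    rwa [hFN, finrank_bot, add_zero] at this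
  have htake := conjHilb_sort_take_sum H (Module.finrank k A) N hH0 hHn
  constructor
  · have h0 := hP.2 0
    simp only [Nat.sub_zero, Multiset.map_id'] at h0
    rw [← h0, pow_zero, Module.End.one_eq_id, LinearMap.range_id, finrank_top]
    -- Truncating at `i` changes nothing once `i` bounds both the number of parts and all `H d`.
    set Q := conjHilb H (Module.finrank k A)
    have h1 := htake ((Q.sort (· ≥ ·)).length + Module.finrank k A)
    rw [List.take_of_length_le (by omega), ← Multiset.sum_coe, Multiset.sort_eq] at h1
    rw [h1]
    conv_lhs => rw [← hHsum]
    refine Finset.sum_congr rfl fun d _ => ?_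
    have := hHn d
    omega
  · intro i
    rw [htake]
    set S := (Finset.range N).filter (fun d => i < H d) with hS
    have hrank := finrank_map_pow_le (LinearMap.mulLeft k ℓ) F hF hshift N hFN S N 0 S.card
      (by omega) (Finset.card_filter_le _ _)
    rw [hF0, Submodule.map_top, hP.2] at hrank
    have hP' : ((P.sort (· ≥ ·)).map (fun p => p - S.card)).sum =
        (P.map (fun p => p - S.card)).sum := by
      rw [← Multiset.sum_coe, ← Multiset.map_coe, Multiset.sort_eq]
    have h1 := sum_take_le (P.sort (· ≥ ·)) i S.card
    rw [hP'] at h1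
    have h2 : ∑ d ∈ Finset.range N, min (H d) i =
        i * S.card + ∑ d ∈ (Finset.Ico 0 N).filter (· ∉ S), H d := by
      rw [← Finset.sum_filter_add_sum_filter_not (Finset.range N) (fun d => i < H d)]
      congr 1
      · rw [mul_comm, ← smul_eq_mul, ← Finset.sum_const]
        refine Finset.sum_congr rfl fun d hd => ?_
        exact min_eq_right (Finset.mem_filter.1 hd).2.le
      · refine Finset.sum_congr ?_ fun d hd => ?_
        · ext d
          simp only [hS, Finset.mem_filter, Finset.mem_range, Finset.mem_Ico]
          have := Nat.zero_le d
          tauto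
        · simp only [hS, Finset.mem_filter, Finset.mem_range, Finset.mem_Ico] at hd
          exact min_eq_left (not_lt.1 fun h => hd.2 ⟨hd.1.2, h⟩)
    rw [h2]
    exact h1.trans (Nat.add_le_add_left hrank _)
end

section
/- Let A be a (possibly non-standard) graded Artinian algebra over a field k whose associated graded algebra Gr_{m_A}(A) satisfies H(Gr_{m_A}(A))^∨ < H(A)^∨ strictly in the dominance order. Then A has no strong Lefschetz element; i.e., A is not strong Lefschetz. -/
/-- A linear form `ℓ` is strong Lefschetz for the graded algebra `A` with
grading `𝒜` if `ℓ ∈ 𝒜 1` and all multiplication maps `×ℓ^j : 𝒜 i → 𝒜 (i+j)`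
have maximal rank. -/
def IsSL {k A : Type*} [Field k] [CommRing A] [Algebra k A]
    (𝒜 : ℕ → Submodule k A) (ℓ : A) : Prop :=
  ℓ ∈ 𝒜 1 ∧ ∀ i j : ℕ,
    Module.finrank k ((𝒜 i).map (LinearMap.mulLeft k (ℓ ^ j))) =
      min (Module.finrank k (𝒜 i)) (Module.finrank k (𝒜 (i + j)))

/-! ### Partial sums of conjugate partitions -/

/-- For a weakly decreasing sequence, discarding zeros and sorting does not change the partial
sums. -/
theorem sum_take_sort_antitone (c : ℕ → ℕ) (hc : Antitone c) (n i : ℕ) (hi : i ≤ n) :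
    (((((Multiset.range n).map c).filter (fun x => 0 < x)).sort (· ≥ ·)).take i).sum
      = ∑ t ∈ Finset.range i, c t := by
  -- `r` is the number of positive terms among the first `n`.
  obtain ⟨r, hrn, hpos, hzero⟩ : ∃ r ≤ n, (∀ t < r, 0 < c t) ∧ ∀ t, r ≤ t → t < n → c t = 0 := by
    clear hi
    induction n with
    | zero => exact ⟨0, le_rfl, by simp, by simp⟩
    | succ n ih =>
      obtain ⟨r, hr, h1, h2⟩ := ih
      by_cases h : 0 < c n
      · exact ⟨n + 1, le_rfl, fun t ht => h.trans_le (hc (by omega)), fun t h3 h4 => by omega⟩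
      · refine ⟨r, by omega, h1, fun t h3 h4 => ?_⟩
        rcases Nat.lt_succ_iff_lt_or_eq.mp h4 with h5 | h5
        · exact h2 t h3 h5
        · subst h5; omega
  have hfil : ((Multiset.range n).map c).filter (fun x => 0 < x)
      = (((List.range r).map c : List ℕ) : Multiset ℕ) := by
    obtain ⟨s, rfl⟩ := Nat.exists_eq_add_of_le hrn
    rw [Multiset.range_add, Multiset.map_add, Multiset.filter_add,
      Multiset.filter_eq_self.2, Multiset.filter_eq_nil.2, add_zero]
    · rfl
    · intro a ha
      simp only [Multiset.map_map, Multiset.mem_map, Multiset.mem_range, Function.comp] at ha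
      obtain ⟨b, hb, rfl⟩ := ha
      simp [hzero (r + b) (by omega) (by omega)]
    · intro a ha
      simp only [Multiset.mem_map, Multiset.mem_range] at ha
      obtain ⟨b, hb, rfl⟩ := ha
      exact hpos b hb
  have hsort : (((List.range r).map c : List ℕ) : Multiset ℕ).sort (· ≥ ·)
      = (List.range r).map c := by
    refine List.Perm.eq_of_pairwise' (r := (· ≥ ·)) (Multiset.pairwise_sort _ _) ?_ ?_
    · rw [List.pairwise_map]
      exact List.pairwise_lt_range.imp fun h => hc h.le
    · exact Multiset.coe_eq_coe.1 (Multiset.sort_eq _ _)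
  rw [hfil, hsort, ← List.map_take, List.take_range]
  change ∑ t ∈ Finset.range (min i r), c t = _
  refine Finset.sum_subset (by intro t; simp; omega) fun t ht hnt => ?_
  simp only [Finset.mem_range] at ht hnt
  exact hzero t (by omega) (by omega)

theorem sum_take_sort_conjHilb (H : ℕ → ℕ) (N : ℕ) (hN : ∀ d, N ≤ d → H d = 0)
    (n i : ℕ) (hi : i ≤ n) :
    (((conjHilb H n).sort (· ≥ ·)).take i).sum
      = ∑ t ∈ Finset.range i, Set.ncard {d : ℕ | t + 1 ≤ H d} := by
  refine sum_take_sort_antitone _ ?_ n i hi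
  intro s t hst
  refine Set.ncard_le_ncard ?_ ?_
  · intro d hd
    simp only [Set.mem_ofPred_eq] at hd ⊢
    omega
  · refine (Set.finite_Iio N).subset fun d hd => ?_
    simp only [Set.mem_ofPred_eq, Set.mem_Iio] at hd ⊢
    by_contra h
    have := hN d (by omega)
    omega

theorem min_eq_sum_ite (x i : ℕ) : min x i = ∑ t ∈ Finset.range i, if t < x then 1 else 0 := by
  rw [← Finset.card_filter]
  have : (Finset.range i).filter (fun t => t < x) = Finset.range (min x i) := by
    ext t; simp; omega
  simp [this]

theorem sum_ncard_eq (H : ℕ → ℕ) (N : ℕ) (hN : ∀ d, N ≤ d → H d = 0) (i : ℕ) :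
    ∑ t ∈ Finset.range i, Set.ncard {d : ℕ | t + 1 ≤ H d}
      = ∑ d ∈ Finset.range N, min (H d) i := by
  simp_rw [min_eq_sum_ite]
  rw [Finset.sum_comm]
  refine Finset.sum_congr rfl fun t _ => ?_
  rw [← Finset.card_filter, ← Set.ncard_coe_finset]
  congr 1
  ext d
  simp only [Set.mem_ofPred_eq, Finset.coe_filter, Finset.mem_range]
  constructor
  · intro h
    refine ⟨?_, h⟩
    by_contra h'
    have := hN d (by omega)
    omega
  · exact fun h => h.2

/-- For unimodal `h`, each level set `{d < N | t < h d}` is an interval, so at most `j` of its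
elements leave it under translation by `j`. -/
theorem sum_min_le_of_unimodal (h : ℕ → ℕ) (N : ℕ)
    (huni : ∀ a b c, a ≤ b → b ≤ c → min (h a) (h c) ≤ h b) (i j : ℕ) :
    ∑ d ∈ Finset.range N, min (h d) i
      ≤ ∑ d ∈ Finset.range N, min (h d) (h (d + j)) + i * j := by
  have key : ∀ t, ((Finset.range N).filter fun d => t < h d).card
      ≤ ((Finset.range N).filter fun d => t < min (h d) (h (d + j))).card + j := by
    intro t
    by_cases hne : ((Finset.range N).filter fun d => t < h d).Nonempty
    · set I := (Finset.range N).filter fun d => t < h d with hI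
      set b := I.max' hne with hb
      have hbI : b ∈ I := Finset.max'_mem _ _
      have hsub : I ⊆ ((Finset.range N).filter fun d => t < min (h d) (h (d + j)))
          ∪ Finset.Ico (b + 1 - j) (b + 1) := by
        intro d hd
        have hdb : d ≤ b := Finset.le_max' _ _ hd
        simp only [hI, Finset.mem_filter, Finset.mem_range] at hd hbI
        simp only [Finset.mem_union, Finset.mem_filter, Finset.mem_range, Finset.mem_Ico]
        by_cases hj : d + j ≤ b
        · left
          have := huni d (d + j) b (by omega) hj
          omega
        · right; omega
      have h1 := Finset.card_le_card hsub
      have h2 := Finset.card_union_le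
        ((Finset.range N).filter fun d => t < min (h d) (h (d + j)))
        (Finset.Ico (b + 1 - j) (b + 1))
      have h3 : (Finset.Ico (b + 1 - j) (b + 1)).card ≤ j := by simp; omega
      omega
    · rw [Finset.not_nonempty_iff_eq_empty] at hne
      simp [hne]
  calc ∑ d ∈ Finset.range N, min (h d) i
      = ∑ t ∈ Finset.range i, ((Finset.range N).filter fun d => t < h d).card := by
        simp_rw [min_eq_sum_ite, Finset.card_filter]
        exact Finset.sum_comm
    _ ≤ ∑ t ∈ Finset.range i,
          (((Finset.range N).filter fun d => t < min (h d) (h (d + j))).card + j) :=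
        Finset.sum_le_sum fun t _ => key t
    _ = ∑ d ∈ Finset.range N, min (min (h d) (h (d + j))) i + i * j := by
        rw [Finset.sum_add_distrib]
        simp_rw [min_eq_sum_ite _ i, Finset.card_filter]
        rw [Finset.sum_comm]
        simp
    _ ≤ _ := by
        exact Nat.add_le_add_right (Finset.sum_le_sum fun d _ => min_le_left _ _) _

/-! ### Ranks of powers of an endomorphism -/

section LinearAlgebra

variable {k V : Type*} [Field k] [AddCommGroup V] [Module k V] [FiniteDimensional k V]

theorem finrank_map_add_finrank_ker_inf (f : V →ₗ[k] V) (p : Submodule k V) :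
    Module.finrank k (p.map f) + Module.finrank k (LinearMap.ker f ⊓ p : Submodule k V)
      = Module.finrank k p := by
  have h := (f.domRestrict p).finrank_range_add_finrank_ker
  rw [LinearMap.range_domRestrict, LinearMap.ker_domRestrict] at h
  rw [← h]
  congr 1
  have e := Submodule.equivMapOfInjective p.subtype p.subtype_injective
    ((LinearMap.ker f).comap p.subtype)
  have h2 := e.finrank_eq
  rw [Submodule.map_comap_subtype, inf_comm] at h2
  exact h2.symm

/-- If `f` raises a decreasing filtration `F` by one step, then `ker fʲ` is at least as large as the
sum of any `j` graded pieces. Removing the least index `d`, this follows by induction from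
`fʲ⁺¹ (F d) ⊆ fʲ (F (d + 1))`. -/
theorem sum_gap_le_finrank_ker (f : V →ₗ[k] V) (F : ℕ → Submodule k V) (hF : Antitone F)
    (hf : ∀ d, (F d).map f ≤ F (d + 1)) (j : ℕ) :
    ∀ (S : Finset ℕ) (a : ℕ), S.card = j → (∀ d ∈ S, a ≤ d) →
      ∑ d ∈ S, (Module.finrank k (F d) - Module.finrank k (F (d + 1)))
        ≤ Module.finrank k (LinearMap.ker (f ^ j) ⊓ F a : Submodule k V) := by
  induction j with
  | zero =>
    intro S a hS _
    simp [Finset.card_eq_zero.1 hS]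
  | succ j ih =>
    intro S a hS ha
    have hne : S.Nonempty := Finset.card_pos.1 (by omega)
    set d := S.min' hne with hd
    have hdS : d ∈ S := Finset.min'_mem _ _
    have h1 := ih (S.erase d) (d + 1) (by rw [Finset.card_erase_of_mem hdS]; omega) (by
      intro e he
      have h2 := Finset.mem_erase.1 he
      have h3 : d ≤ e := Finset.min'_le _ _ h2.2
      have := h2.1
      omega)
    rw [← Finset.add_sum_erase S _ hdS]
    have h2 : Module.finrank k (LinearMap.ker (f ^ (j + 1)) ⊓ F d : Submodule k V)
        ≤ Module.finrank k (LinearMap.ker (f ^ (j + 1)) ⊓ F a : Submodule k V) :=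
      Submodule.finrank_mono (inf_le_inf_left _ (hF (ha d hdS)))
    have h3 : Module.finrank k ((F d).map (f ^ (j + 1)))
        ≤ Module.finrank k ((F (d + 1)).map (f ^ j)) := by
      refine Submodule.finrank_mono ?_
      rw [pow_succ, Module.End.mul_eq_comp, Submodule.map_comp]
      exact Submodule.map_mono (hf d)
    have h4 := finrank_map_add_finrank_ker_inf (f ^ (j + 1)) (F d)
    have h5 := finrank_map_add_finrank_ker_inf (f ^ j) (F (d + 1))
    have h6 : Module.finrank k (F (d + 1)) ≤ Module.finrank k (F d) :=
      Submodule.finrank_mono (hF (Nat.le_succ d))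
    omega

theorem sum_finrank_eq_finrank_sup {ι : Type*} (s : Finset ι) (G : ι → Submodule k V)
    (hG : s.SupIndep G) :
    ∑ d ∈ s, Module.finrank k (G d) = Module.finrank k (s.sup G : Submodule k V) := by
  classical
  induction s using Finset.induction_on with
  | empty => rw [Finset.sum_empty, Finset.sup_empty, finrank_bot]
  | insert a s ha ih =>
    rw [Finset.sum_insert ha, ih (hG.subset (Finset.subset_insert _ _)), Finset.sup_insert]
    have hdis : Disjoint (G a) (s.sup G) :=
      hG (Finset.subset_insert _ _) (Finset.mem_insert_self _ _) ha
    have := Submodule.finrank_sup_add_finrank_inf_eq (G a) (s.sup G)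
    rw [hdis.eq_bot, finrank_bot] at this
    omega

end LinearAlgebra

/-! ### Graded algebras -/

section Graded

variable {k A : Type*} [Field k] [CommRing A] [Algebra k A]
  (𝒜 : ℕ → Submodule k A) [GradedAlgebra 𝒜]

theorem map_mulLeft_pow_le {ℓ : A} (hℓ : ℓ ∈ 𝒜 1) (d j : ℕ) :
    (𝒜 d).map (LinearMap.mulLeft k (ℓ ^ j)) ≤ 𝒜 (d + j) := by
  rintro _ ⟨x, hx, rfl⟩
  have h := SetLike.mul_mem_graded (SetLike.pow_mem_graded j hℓ) hx
  rw [smul_eq_mul, mul_one, add_comm] at h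
  exact h

variable [FiniteDimensional k A]

theorem exists_forall_graded_eq_bot : ∃ N, ∀ d, N ≤ d → 𝒜 d = ⊥ := by
  have hind : iSupIndep 𝒜 := (DirectSum.Decomposition.isInternal 𝒜).submodule_iSupIndep
  obtain ⟨N, hN⟩ := (Submodule.finite_ne_bot_of_iSupIndep hind).bddAbove
  refine ⟨N + 1, fun d hd => ?_⟩
  by_contra h
  have : d ≤ N := hN h
  omega

theorem exists_gradedMaxIdeal_pow_eq_bot : ∃ N, gradedMaxIdeal 𝒜 ^ N = ⊥ := by
  obtain ⟨N, hN⟩ := exists_forall_graded_eq_bot 𝒜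
  have : IsArtinianRing A := IsArtinianRing.of_finite k A
  have hle : gradedMaxIdeal 𝒜 ≤ nilradical A := by
    refine Ideal.span_le.2 ?_
    rintro x ⟨i, hx⟩
    refine mem_nilradical.2 ⟨N, ?_⟩
    have h := SetLike.pow_mem_graded N hx
    rw [hN _ (by simp only [smul_eq_mul]; nlinarith)] at h
    exact (Submodule.mem_bot k).1 h
  obtain ⟨M, hM⟩ := IsArtinianRing.isNilpotent_nilradical (R := A)
  refine ⟨M, ?_⟩
  have := Ideal.pow_right_mono hle M
  rw [hM] at this
  exact le_bot_iff.1 this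

/-- Maximal rank forces unimodality: `×ℓ^(c - a)` factors through the intermediate degree `b`. -/
theorem IsSL.unimodal {ℓ : A} (hℓ : IsSL 𝒜 ℓ) (a b c : ℕ) (hab : a ≤ b) (hbc : b ≤ c) :
    min (Module.finrank k (𝒜 a)) (Module.finrank k (𝒜 c)) ≤ Module.finrank k (𝒜 b) := by
  obtain ⟨s, rfl⟩ := Nat.exists_eq_add_of_le hab
  obtain ⟨t, rfl⟩ := Nat.exists_eq_add_of_le hbc
  rw [add_assoc, ← hℓ.2 a (s + t)]
  have hle : (𝒜 a).map (LinearMap.mulLeft k (ℓ ^ (s + t)))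
      ≤ (𝒜 (a + s)).map (LinearMap.mulLeft k (ℓ ^ t)) := by
    have h : LinearMap.mulLeft k (ℓ ^ (s + t))
        = (LinearMap.mulLeft k (ℓ ^ t)).comp (LinearMap.mulLeft k (ℓ ^ s)) := by
      ext x
      simp only [LinearMap.mulLeft_apply, LinearMap.comp_apply]
      ring
    rw [h, Submodule.map_comp]
    exact Submodule.map_mono (map_mulLeft_pow_le 𝒜 hℓ.1 a s)
  exact (Submodule.finrank_mono hle).trans (Submodule.finrank_map_le _ _)

theorem IsSL.sum_min_le_finrank_range {ℓ : A} (hℓ : IsSL 𝒜 ℓ) (N j : ℕ) :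
    ∑ d ∈ Finset.range N, min (Module.finrank k (𝒜 d)) (Module.finrank k (𝒜 (d + j)))
      ≤ Module.finrank k (LinearMap.range (LinearMap.mulLeft k ℓ ^ j)) := by
  have hind : iSupIndep 𝒜 := (DirectSum.Decomposition.isInternal 𝒜).submodule_iSupIndep
  have hind' : iSupIndep fun d => (𝒜 d).map (LinearMap.mulLeft k (ℓ ^ j)) :=
    (hind.comp (add_left_injective j)).mono fun d => map_mulLeft_pow_le 𝒜 hℓ.1 d j
  simp_rw [← hℓ.2]
  rw [sum_finrank_eq_finrank_sup _ _ (hind'.supIndep' (Finset.range N)), LinearMap.pow_mulLeft]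
  exact Submodule.finrank_mono (Finset.sup_le fun d _ => LinearMap.map_le_range)

theorem sum_grHilb (m : Ideal A) (N : ℕ) (hN : m ^ N = ⊥) :
    ∑ d ∈ Finset.range N, grHilb k m d = Module.finrank k A := by
  have hanti : Antitone fun d => Module.finrank k ((m ^ d).restrictScalars k) :=
    fun a b hab => Submodule.finrank_mono (s := (m ^ b).restrictScalars k)
      (t := (m ^ a).restrictScalars k) (Ideal.pow_le_pow_right hab)
  have key : ∀ M, ∑ d ∈ Finset.range M, grHilb k m d
      + Module.finrank k ((m ^ M).restrictScalars k) = Module.finrank k A := by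
    intro M
    induction M with
    | zero => rw [Finset.sum_range_zero, zero_add, pow_zero, Ideal.one_eq_top,
        Submodule.restrictScalars_top, finrank_top]
    | succ M ih =>
      have h : Module.finrank k ((m ^ (M + 1)).restrictScalars k)
          ≤ Module.finrank k ((m ^ M).restrictScalars k) := hanti (Nat.le_succ M)
      rw [Finset.sum_range_succ, ← ih, grHilb]
      omega
  rw [← key N, hN, Submodule.restrictScalars_bot, finrank_bot, add_zero]

/-- The partial sums of the conjugate of `H(A)` are bounded by those of the conjugate of the Hilbert
function of the associated graded algebra. -/
theorem IsSL.sum_min_le_sum_min_grHilb {ℓ : A} (hℓ : IsSL 𝒜 ℓ) (N : ℕ)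
    (hm : gradedMaxIdeal 𝒜 ^ N = ⊥) (i : ℕ) :
    ∑ d ∈ Finset.range N, min (Module.finrank k (𝒜 d)) i
      ≤ ∑ d ∈ Finset.range N, min (grHilb k (gradedMaxIdeal 𝒜) d) i := by
  set m := gradedMaxIdeal 𝒜 with hmdef
  have hℓm : ℓ ∈ m := Ideal.subset_span ⟨0, hℓ.1⟩
  set S := (Finset.range N).filter fun d => i < grHilb k m d with hS
  have h1 := sum_min_le_of_unimodal (fun d => Module.finrank k (𝒜 d)) N (hℓ.unimodal 𝒜) i S.card
  have h2 := hℓ.sum_min_le_finrank_range 𝒜 N S.card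
  have h3 := sum_gap_le_finrank_ker (LinearMap.mulLeft k ℓ)
    (fun d => (m ^ d).restrictScalars k) (fun a b hab => Ideal.pow_le_pow_right hab)
    (by
      rintro d _ ⟨x, hx, rfl⟩
      change ℓ * x ∈ m ^ (d + 1)
      rw [pow_succ']
      exact Ideal.mul_mem_mul hℓm hx) S.card S 0 rfl (by simp)
  have h4 := (LinearMap.mulLeft k ℓ ^ S.card).finrank_range_add_finrank_ker
  have h5 := (Submodule.finrank_mono (inf_le_left : LinearMap.ker (LinearMap.mulLeft k ℓ ^ S.card) ⊓
    (m ^ 0).restrictScalars k ≤ _))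
  have h6 := sum_grHilb (k := k) m N hm
  rw [← Finset.sum_filter_add_sum_filter_not _ (fun d => i < grHilb k m d)] at h6
  rw [← Finset.sum_filter_add_sum_filter_not (Finset.range N) (fun d => i < grHilb k m d)
    (fun d => min (grHilb k m d) i)]
  have h7 : ∑ d ∈ Finset.range N with i < grHilb k m d, min (grHilb k m d) i = i * S.card := by
    rw [Finset.sum_congr rfl (g := fun _ => i), Finset.sum_const, smul_eq_mul, mul_comm]
    intro d hd
    exact min_eq_right (Finset.mem_filter.1 hd).2.le
  have h8 : ∑ d ∈ Finset.range N with ¬ i < grHilb k m d, min (grHilb k m d) i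
      = ∑ d ∈ Finset.range N with ¬ i < grHilb k m d, grHilb k m d :=
    Finset.sum_congr rfl fun d hd => min_eq_left (not_lt.1 (Finset.mem_filter.1 hd).2)
  rw [h7, h8]
  change ∑ d ∈ S, grHilb k m d ≤ _ at h3
  change ∑ d ∈ S, grHilb k m d + _ = _ at h6
  omega

end Graded

/-- Let `A` be a (possibly non-standard) graded Artinian algebra over a field
`k` whose associated graded algebra satisfies `H(Gr_{m_A}(A))^∨ < H(A)^∨`
strictly in the dominance order.  Then `A` has no strong Lefschetz element. -/
theorem not_strongLefschetz_of_conj_assocGraded_lt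
    {k A : Type*} [Field k] [CommRing A] [Algebra k A]
    (𝒜 : ℕ → Submodule k A) [GradedAlgebra 𝒜] [FiniteDimensional k A]
    (hconn : 𝒜 0 = Submodule.span k {(1 : A)})
    (hlt : DomLE (conjHilb (grHilb k (gradedMaxIdeal 𝒜)) (Module.finrank k A))
        (conjHilb (fun i => Module.finrank k (𝒜 i)) (Module.finrank k A)))
    (hne : conjHilb (grHilb k (gradedMaxIdeal 𝒜)) (Module.finrank k A) ≠
        conjHilb (fun i => Module.finrank k (𝒜 i)) (Module.finrank k A)) :
    ¬ ∃ ℓ : A, IsSL 𝒜 ℓ := by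
  rintro ⟨ℓ, hℓ⟩
  obtain ⟨N₁, hN₁⟩ := exists_forall_graded_eq_bot 𝒜
  obtain ⟨N₂, hN₂⟩ := exists_gradedMaxIdeal_pow_eq_bot 𝒜
  set N := max N₁ N₂ with hNdef
  have hN : ∀ d, N ≤ d → 𝒜 d = ⊥ := fun d hd => hN₁ d ((le_max_left _ _).trans hd)
  have hm : ∀ d, N ≤ d → gradedMaxIdeal 𝒜 ^ d = ⊥ := fun d hd =>
    le_bot_iff.1 (hN₂ ▸ Ideal.pow_le_pow_right ((le_max_right _ _).trans hd))
  have hh : ∀ d, N ≤ d → (fun i => Module.finrank k (𝒜 i)) d = 0 := fun d hd => by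
    change Module.finrank k (𝒜 d) = 0
    rw [hN d hd, finrank_bot]
  have hg : ∀ d, N ≤ d → grHilb k (gradedMaxIdeal 𝒜) d = 0 := fun d hd => by
    have : Module.finrank k ((gradedMaxIdeal 𝒜 ^ d).restrictScalars k) = 0 := by
      rw [hm d hd, Submodule.restrictScalars_bot, finrank_bot]
    simp [grHilb, this]
  -- Both dominance inequalities together make all partial sums equal.
  have heq : ∀ i ≤ Module.finrank k A,
      ∑ t ∈ Finset.range i, Set.ncard {d : ℕ | t + 1 ≤ grHilb k (gradedMaxIdeal 𝒜) d}
        = ∑ t ∈ Finset.range i, Set.ncard {d : ℕ | t + 1 ≤ Module.finrank k (𝒜 d)} := by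
    intro i hi
    apply le_antisymm
    · have h := hlt.2 i
      rwa [sum_take_sort_conjHilb _ N hg _ _ hi, sum_take_sort_conjHilb _ N hh _ _ hi] at h
    · rw [sum_ncard_eq _ N hg, sum_ncard_eq _ N hh]
      exact hℓ.sum_min_le_sum_min_grHilb 𝒜 N (hm N le_rfl) i
  apply hne
  unfold conjHilb
  congr 1
  refine Multiset.map_congr rfl fun t ht => ?_
  rw [Multiset.mem_range] at ht
  have h1 := heq (t + 1) ht
  have h2 := heq t ht.le
  rw [Finset.sum_range_succ, Finset.sum_range_succ, h2] at h1
  exact Nat.add_left_cancel h1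
end
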